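/- arXiv:1901.10886 — 2 statements merged into one kernel-verified Lean document; each statement's English description precedes it below -/
import Mathlib

section
/- For all positive reals u, v, ∫_0^{(3/(4√2))√(u/v)} e^{-ux²}(e^{vx⁴} - 1) dx < (1/(3√3)) · v^{1/2}/u^{3/2}. -/
open Real

theorem pz1 (z : ℝ) (h1 : (0/1) ≤ z) (h2 : z ≤ (11/20)) : 0 ≤ (209/2500)*z^0 + (-(581/5000))*z^1 + (-(3/25))*z^2 + (-(327/2000))*z^3 + (-(871/2500))*z^4 + (1879/1000)*z^5 + (-(10221/10000))*z^7 := by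
  have e1 : 0 ≤ z - (0/1) := by linarith
  have e2 : 0 ≤ (11/20) - z := by linarith
  have e : (209/2500)*z^0 + (-(581/5000))*z^1 + (-(3/25))*z^2 + (-(327/2000))*z^3 + (-(871/2500))*z^4 + (1879/1000)*z^5 + (-(10221/10000))*z^7 = (9728000/1771561)*(z-(0/1))^0*((11/20)-z)^7 + (60659200/1771561)*(z-(0/1))^1*((11/20)-z)^6 + (14131200/161051)*(z-(0/1))^2*((11/20)-z)^5 + (204642640/1771561)*(z-(0/1))^3*((11/20)-z)^4 + (665663984/8857805)*(z-(0/1))^4*((11/20)-z)^3 + (31378726/1771561)*(z-(0/1))^5*((11/20)-z)^2 + (2864108/8857805)*(z-(0/1))^6*((11/20)-z)^1 + (3855399019/17715610000)*(z-(0/1))^7*((11/20)-z)^0 := by ring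
  rw [e]; positivity

theorem pz2 (z : ℝ) (h1 : (11/20) ≤ z) (h2 : z ≤ (1/1)) : 0 ≤ (209/2500)*z^0 + (-(581/5000))*z^1 + (-(3/25))*z^2 + (-(327/2000))*z^3 + (-(871/2500))*z^4 + (1879/1000)*z^5 + (-(10221/10000))*z^7 := by
  have e1 : 0 ≤ z - (11/20) := by linarith
  have e2 : 0 ≤ (1/1) - z := by linarith
  have e : (209/2500)*z^0 + (-(581/5000))*z^1 + (-(3/25))*z^2 + (-(327/2000))*z^3 + (-(871/2500))*z^4 + (1879/1000)*z^5 + (-(10221/10000))*z^7 = (42409389209/47829690000)*(z-(11/20))^0*((1/1)-z)^7 + (24410095933/2391484500)*(z-(11/20))^1*((1/1)-z)^6 + (3910276253/39858075)*(z-(11/20))^2*((1/1)-z)^5 + (9674904044/23914845)*(z-(11/20))^3*((1/1)-z)^4 + (3816095584/4782969)*(z-(11/20))^4*((1/1)-z)^3 + (1259504000/1594323)*(z-(11/20))^5*((1/1)-z)^2 + (1723904000/4782969)*(z-(11/20))^6*((1/1)-z)^1 + (246272000/4782969)*(z-(11/20))^7*((1/1)-z)^0 := by ring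
  rw [e]; positivity

theorem py0 (y : ℝ) (h1 : (0/1) ≤ y) (h2 : y ≤ (41/200)) : 0 ≤ (68/625)*((y^2-y^4)-(0/1)) - (y^3/2+y^5/8+5*y^7/64) := by
  have e1 : 0 ≤ y - (0/1) := by linarith
  have e2 : 0 ≤ (41/200) - y := by linarith
  have e : (68/625)*((y^2-y^4)-(0/1)) - (y^3/2+y^5/8+5*y^7/64) = (34816000000/115856201)*(y-(0/1))^2*((41/200)-y)^5 + (141280000000/115856201)*(y-(0/1))^3*((41/200)-y)^4 + (215496857600/115856201)*(y-(0/1))^4*((41/200)-y)^3 + (146625967800/115856201)*(y-(0/1))^5*((41/200)-y)^2 + (37801362800/115856201)*(y-(0/1))^6*((41/200)-y)^1 + (12748885395/7414796864)*(y-(0/1))^7*((41/200)-y)^0 := by ring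
  rw [e]; positivity

theorem py1 (y : ℝ) (h1 : (41/200) ≤ y) (h2 : y ≤ (297/1000)) : 0 ≤ (68/625)*((y^2-y^4)-(0/1)) + (581/5000)*((y^2-y^4)-(9/224)) - (y^3/2+y^5/8+5*y^7/64) := by
  have e1 : 0 ≤ y - (41/200) := by linarith
  have e2 : 0 ≤ (297/1000) - y := by linarith
  have e : (68/625)*((y^2-y^4)-(0/1)) + (581/5000)*((y^2-y^4)-(9/224)) - (y^3/2+y^5/8+5*y^7/64) = (2271670086765234375/3570218247913472)*(y-(41/200))^0*((297/1000)-y)^7 + (135513380287731328125/3570218247913472)*(y-(41/200))^1*((297/1000)-y)^6 + (683797609390090796875/3570218247913472)*(y-(41/200))^2*((297/1000)-y)^5 + (1428824415472658265625/3570218247913472)*(y-(41/200))^3*((297/1000)-y)^4 + (1506353665857226853125/3570218247913472)*(y-(41/200))^4*((297/1000)-y)^3 + (799013156824819830375/3570218247913472)*(y-(41/200))^5*((297/1000)-y)^2 + (172449171540034864425/3570218247913472)*(y-(41/200))^6*((297/1000)-y)^1 + (1520885365607706435/3570218247913472)*(y-(41/200))^7*((297/1000)-y)^0 := by ring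
  rw [e]; positivity

theorem py2 (y : ℝ) (h1 : (297/1000) ≤ y) (h2 : y ≤ (187/500)) : 0 ≤ (68/625)*((y^2-y^4)-(0/1)) + (581/5000)*((y^2-y^4)-(9/224)) + (3/25)*((y^2-y^4)-(9/112)) - (y^3/2+y^5/8+5*y^7/64) := by
  have e1 : 0 ≤ y - (297/1000) := by linarith
  have e2 : 0 ≤ (187/500) - y := by linarith
  have e : (68/625)*((y^2-y^4)-(0/1)) + (581/5000)*((y^2-y^4)-(9/224)) + (3/25)*((y^2-y^4)-(9/112)) - (y^3/2+y^5/8+5*y^7/64) = (14464741428693945045/7189738423550144)*(y-(297/1000))^0*((187/500)-y)^7 + (84170278660786261695/513552744539296)*(y-(297/1000))^1*((187/500)-y)^6 + (211340752446054716535/256776372269648)*(y-(297/1000))^2*((187/500)-y)^5 + (217950342937406307475/128388186134824)*(y-(297/1000))^3*((187/500)-y)^4 + (113369584583245823225/64194093067412)*(y-(297/1000))^4*((187/500)-y)^3 + (29749776154554199885/32097046533706)*(y-(297/1000))^5*((187/500)-y)^2 + (3209655858151202445/16048523266853)*(y-(297/1000))^6*((187/500)-y)^1 + (308930962957514190/112339662867971)*(y-(297/1000))^7*((187/500)-y)^0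 := by ring
  rw [e]; positivity

theorem py3 (y : ℝ) (h1 : (187/500) ≤ y) (h2 : y ≤ (449/1000)) : 0 ≤ (68/625)*((y^2-y^4)-(0/1)) + (581/5000)*((y^2-y^4)-(9/224)) + (3/25)*((y^2-y^4)-(9/112)) + (327/2000)*((y^2-y^4)-(27/224)) - (y^3/2+y^5/8+5*y^7/64) := by
  have e1 : 0 ≤ y - (187/500) := by linarith
  have e2 : 0 ≤ (449/1000) - y := by linarith
  have e : (68/625)*((y^2-y^4)-(0/1)) + (581/5000)*((y^2-y^4)-(9/224)) + (3/25)*((y^2-y^4)-(9/112)) + (327/2000)*((y^2-y^4)-(27/224)) - (y^3/2+y^5/8+5*y^7/64) = (1142386780566982/2076416015625)*(y-(187/500))^0*((449/1000)-y)^7 + (85164283477846457/296630859375)*(y-(187/500))^1*((449/1000)-y)^6 + (875952368810851217/593261718750)*(y-(187/500))^2*((449/1000)-y)^5 + (723334934100734753/237304687500)*(y-(187/500))^3*((449/1000)-y)^4 + (1494182542416790931/474609375000)*(y-(187/500))^4*((449/1000)-y)^3 + (7716581120139986011/4746093750000)*(y-(187/500))^5*((449/1000)-y)^2 + (1062577350527999833/3164062500000)*(y-(187/500))^6*((449/1000)-y)^1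 + (120041992684091/44296875000000)*(y-(187/500))^7*((449/1000)-y)^0 := by ring
  rw [e]; positivity

theorem py4 (y : ℝ) (h1 : (449/1000) ≤ y) (h2 : y ≤ (663/1250)) : 0 ≤ (68/625)*((y^2-y^4)-(0/1)) + (581/5000)*((y^2-y^4)-(9/224)) + (3/25)*((y^2-y^4)-(9/112)) + (327/2000)*((y^2-y^4)-(27/224)) + (871/2500)*((y^2-y^4)-(9/56)) - (y^3/2+y^5/8+5*y^7/64) := by
  have e1 : 0 ≤ y - (449/1000) := by linarith
  have e2 : 0 ≤ (663/1250) - y := by linarith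
  have e : (68/625)*((y^2-y^4)-(0/1)) + (581/5000)*((y^2-y^4)-(9/224)) + (3/25)*((y^2-y^4)-(9/112)) + (327/2000)*((y^2-y^4)-(27/224)) + (871/2500)*((y^2-y^4)-(9/56)) - (y^3/2+y^5/8+5*y^7/64) = (2973566794897590022265625/828779267922708812864)*(y-(449/1000))^0*((663/1250)-y)^7 + (13660506604901849887421875/29599259568668171888)*(y-(449/1000))^1*((663/1250)-y)^6 + (17870473616338222510921875/7399814892167042972)*(y-(449/1000))^2*((663/1250)-y)^5 + (9662458654784225929234375/1849953723041760743)*(y-(449/1000))^3*((663/1250)-y)^4 + (10812223320793898654712500/1849953723041760743)*(y-(449/1000))^4*((663/1250)-y)^3 + (6470635831063383689594000/1849953723041760743)*(y-(449/1000))^5*((663/1250)-y)^2 + (1892566713655916993140800/1849953723041760743)*(y-(449/1000))^6*((663/1250)-y)^1 + (1345186998639604827175680/12949676061292325201)*(y-(449/1000))^7*((663/1250)-y)^0 := by ring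
  rw [e]; positivity

noncomputable def dhat (s : ℝ) : ℝ :=
  (68/625) * max 0 (s - (0/1)) + (581/5000) * max 0 (s - (9/224)) + (3/25) * max 0 (s - (9/112)) + (327/2000) * max 0 (s - (27/224)) + (871/2500) * max 0 (s - (9/56)) + (-(1879/1000)) * max 0 (s - (45/224))

theorem dhat_cont : Continuous dhat := by unfold dhat; fun_prop

theorem fall (c y t : ℝ) (hc : 0 < c) (hc2 : c ^ 2 = 9/32) (ht : 0 ≤ t) (h1 : 45/224 < t^2) (h2 : t^2 ≤ 9/32) (hy : y ≤ c) :
    y - t ≤ dhat (t^2) := by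
  have hd : dhat (t^2) = (10221/10000) * (c^2 - t^2) := by
    rw [hc2]
    unfold dhat
    rw [max_eq_right (by linarith), max_eq_right (by linarith), max_eq_right (by linarith),
      max_eq_right (by linarith), max_eq_right (by linarith), max_eq_right (by linarith)]
    ring
  rw [hd]
  have c1 : 0.5303 < c := by nlinarith
  have t1 : 0.4482 < t := by nlinarith
  have tc : t ≤ c := by nlinarith
  nlinarith [mul_nonneg (sub_nonneg.2 tc) (by linarith : 0 ≤ (10221/10000) * (c+t) - 1)]

theorem rise (c y : ℝ) (hc : 0 < c) (hc2 : c ^ 2 = 9/32) (hy0 : 0 ≤ y) (hy : y ≤ c) :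
    y - √(y^2-y^4) ≤ dhat (y^2-y^4) := by
  have hc1 : c ≤ 663/1250 := by nlinarith
  have hx : y^2 ≤ 9/32 := by nlinarith
  have hh : 0 ≤ y^2 - y^4 := by nlinarith [sq_nonneg y]
  rcases lt_or_ge (45/224) (y^2-y^4) with h | h
  · have := fall c y (√(y^2-y^4)) hc hc2 (Real.sqrt_nonneg _) (by rwa [Real.sq_sqrt hh])
      (by rw [Real.sq_sqrt hh]; nlinarith [sq_nonneg (y^2)]) hy
    rwa [Real.sq_sqrt hh] at this
  have key : y - √(y^2-y^4) ≤ y^3/2+y^5/8+5*y^7/64 := by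
    have : y - (y^3/2+y^5/8+5*y^7/64) ≤ √(y^2-y^4) := by
      apply Real.le_sqrt_of_sq_le
      have e : (y^2-y^4) - (y - (y^3/2+y^5/8+5*y^7/64))^2
          = (y^2)^4 * (1/32 - 3/32 * y^2 - 5/256 * (y^2)^2 - 25/4096 * (y^2)^3) := by ring
      have x0 : 0 ≤ y^2 := sq_nonneg y
      have x2 : (y^2)^2 ≤ (9/32)^2 := by gcongr
      have x3 : (y^2)^3 ≤ (9/32)^3 := by gcongr
      have : 0 ≤ (y^2)^4 * (1/32 - 3/32 * y^2 - 5/256 * (y^2)^2 - 25/4096 * (y^2)^3) := by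
        apply mul_nonneg (by positivity)
        norm_num at x2 x3
        linarith
      linarith
    linarith
  unfold dhat
  have m0 := le_max_right 0 ((y^2-y^4) - (0/1))
  have m1 := le_max_right 0 ((y^2-y^4) - (9/224))
  have m2 := le_max_right 0 ((y^2-y^4) - (9/112))
  have m3 := le_max_right 0 ((y^2-y^4) - (27/224))
  have m4 := le_max_right 0 ((y^2-y^4) - (9/56))
  have n1 := le_max_left 0 ((y^2-y^4) - (9/224))
  have n2 := le_max_left 0 ((y^2-y^4) - (9/112))
  have n3 := le_max_left 0 ((y^2-y^4) - (27/224))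
  have n4 := le_max_left 0 ((y^2-y^4) - (9/56))
  rw [max_eq_left (by linarith : (y^2-y^4) - 45/224 ≤ 0)]
  rcases le_total y (41/200) with h1 | h1
  · have := py0 y (by linarith) h1
    linarith
  rcases le_total y (297/1000) with h2 | h2
  · have := py1 y h1 h2
    linarith
  rcases le_total y (187/500) with h3 | h3
  · have := py2 y h2 h3
    linarith
  rcases le_total y (449/1000) with h4 | h4
  · have := py3 y h3 h4
    linarith
  have := py4 y h4 (by linarith)
  linarith

theorem int_piece (l a b : ℝ) (hl : 0 < l) (ha : 0 ≤ a) (hab : a ≤ b) :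
    ∫ s in (0:ℝ)..b, l * exp (-l * s) * max 0 (s - a)
      = (exp (-l * a) - exp (-l * b) * (1 + l * (b - a))) / l := by
  have hcont : Continuous fun s : ℝ => l * exp (-l * s) * max 0 (s - a) := by fun_prop
  rw [← intervalIntegral.integral_add_adjacent_intervals (hcont.intervalIntegrable 0 a)
    (hcont.intervalIntegrable a b)]
  have h1 : ∫ s in (0:ℝ)..a, l * exp (-l * s) * max 0 (s - a) = 0 := by
    apply intervalIntegral.integral_zero_ae
    refine Filter.Eventually.of_forall fun s hs => ?_
    rw [Set.uIoc_of_le ha] at hs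
    rw [max_eq_left (by linarith [hs.2])]; ring
  have h2 : ∫ s in a..b, l * exp (-l * s) * max 0 (s - a)
      = ∫ s in a..b, l * exp (-l * s) * (s - a) := by
    apply intervalIntegral.integral_congr
    intro s hs
    rw [Set.uIcc_of_le hab] at hs
    simp only
    rw [max_eq_right (by linarith [hs.1])]
  have h3 : ∫ s in a..b, l * exp (-l * s) * (s - a)
      = (-(exp (-l * b) * (1 + l * (b - a))) / l) - (-(exp (-l * a) * (1 + l * (a - a))) / l) := by
    apply intervalIntegral.integral_eq_sub_of_hasDerivAt
      (f := fun s => -(exp (-l * s) * (1 + l * (s - a))) / l)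
    · intro s _
      have d1 : HasDerivAt (fun s : ℝ => exp (-l * s)) (exp (-l * s) * (-l * 1)) s :=
        ((hasDerivAt_id s).const_mul (-l)).exp
      have d2 : HasDerivAt (fun s : ℝ => 1 + l * (s - a)) (l * 1) s :=
        (((hasDerivAt_id s).sub_const a).const_mul l).const_add 1
      refine ((d1.mul d2).neg.div_const l).congr_deriv ?_
      field_simp
      ring
    · exact Continuous.intervalIntegrable (by fun_prop) _ _
  rw [h1, h2, h3]
  ring

theorem int_dhat (l : ℝ) (hl : 0 < l) :
    l * ∫ s in (0:ℝ)..(9/32), l * exp (-l * s) * dhat s ≤ 1924/10000 := by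
  have I : ∀ a : ℝ, IntervalIntegrable (fun s => l * exp (-l * s) * max 0 (s - a)) MeasureTheory.volume 0 (9/32) :=
    fun a => Continuous.intervalIntegrable (by fun_prop) _ _
  have e : ∀ s, l * exp (-l * s) * dhat s = (68/625) * (l * exp (-l * s) * max 0 (s - (0/1))) + (581/5000) * (l * exp (-l * s) * max 0 (s - (9/224))) + (3/25) * (l * exp (-l * s) * max 0 (s - (9/112))) + (327/2000) * (l * exp (-l * s) * max 0 (s - (27/224))) + (871/2500) * (l * exp (-l * s) * max 0 (s - (9/56))) + (-(1879/1000)) * (l * exp (-l * s) * max 0 (s - (45/224))) := by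
    intro s; unfold dhat; ring
  simp_rw [e]
  have J : ∀ (k a : ℝ), IntervalIntegrable (fun s => k * (l * exp (-l * s) * max 0 (s - a))) MeasureTheory.volume 0 (9/32) :=
    fun k a => (I a).const_mul k
  rw [intervalIntegral.integral_add (((((J _ _).add (J _ _)).add (J _ _)).add (J _ _)).add (J _ _)) (J _ _),
    intervalIntegral.integral_add ((((J _ _).add (J _ _)).add (J _ _)).add (J _ _)) (J _ _),
    intervalIntegral.integral_add (((J _ _).add (J _ _)).add (J _ _)) (J _ _),
    intervalIntegral.integral_add ((J _ _).add (J _ _)) (J _ _),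
    intervalIntegral.integral_add (J _ _) (J _ _)]
  simp only [intervalIntegral.integral_const_mul]
  rw [int_piece l _ _ hl (by norm_num) (by norm_num), int_piece l _ _ hl (by norm_num) (by norm_num),
    int_piece l _ _ hl (by norm_num) (by norm_num), int_piece l _ _ hl (by norm_num) (by norm_num),
    int_piece l _ _ hl (by norm_num) (by norm_num), int_piece l _ _ hl (by norm_num) (by norm_num)]
  obtain ⟨z, hz⟩ : ∃ z, z = exp (-l * (9/224)) := ⟨_, rfl⟩
  have z0 : 0 < z := hz ▸ exp_pos _
  have z1 : z ≤ 1 := by rw [hz]; exact exp_le_one_iff.2 (by nlinarith)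
  have E0 : exp (-l * (0/1)) = 1 := by norm_num
  have E : ∀ (n : ℕ) (a : ℝ), a = n * (9/224) → exp (-l * a) = z ^ n := by
    intro n a h
    rw [hz, ← Real.exp_nat_mul, h]; congr 1; ring
  rw [E0, ← hz, E 2 (9/112) (by norm_num), E 3 (27/224) (by norm_num), E 4 (9/56) (by norm_num),
    E 5 (45/224) (by norm_num), E 7 (9/32) (by norm_num)]
  have fin : 0 ≤ (209/2500)*z^0 + (-(581/5000))*z^1 + (-(3/25))*z^2 + (-(327/2000))*z^3 + (-(871/2500))*z^4 + (1879/1000)*z^5 + (-(10221/10000))*z^7 := by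
    rcases le_total z (11/20) with h | h
    · exact pz1 z (by linarith) h
    · exact pz2 z h (by linarith)
  have : l ≠ 0 := hl.ne'
  field_simp
  nlinarith [fin]

theorem core (c l : ℝ) (hc : 0 < c) (hc2 : c^2 = 9/32) (hl : 0 < l) :
    (∫ y in (0:ℝ)..c, exp (-l * (y^2-y^4))) - ∫ y in (0:ℝ)..c, exp (-l * y^2)
      ≤ ∫ s in (0:ℝ)..(9/32), l * exp (-l * s) * dhat s := by
  have cA : Continuous fun y : ℝ => exp (-l * (y^2-y^4)) := by fun_prop
  have cB : Continuous fun y : ℝ => exp (-l * y^2) := by fun_prop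
  have cP : Continuous fun s : ℝ => l * exp (-l * s) * dhat s := by
    have := dhat_cont; fun_prop
  obtain ⟨A, hA⟩ : ∃ A : ℝ → ℝ, A = fun x => ∫ y in (0:ℝ)..x, exp (-l * (y^2-y^4)) := ⟨_, rfl⟩
  obtain ⟨B, hB⟩ : ∃ B : ℝ → ℝ, B = fun x => ∫ y in (0:ℝ)..x, exp (-l * y^2) := ⟨_, rfl⟩
  obtain ⟨P, hP⟩ : ∃ P : ℝ → ℝ, P = fun x => ∫ s in (0:ℝ)..x, l * exp (-l * s) * dhat s := ⟨_, rfl⟩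
  have dA : ∀ x, HasDerivAt A (exp (-l * (x^2-x^4))) x := fun x => by
    rw [hA]; exact cA.integral_hasStrictDerivAt 0 x |>.hasDerivAt
  have dB : ∀ x, HasDerivAt B (exp (-l * x^2)) x := fun x => by
    rw [hB]; exact cB.integral_hasStrictDerivAt 0 x |>.hasDerivAt
  have dP : ∀ x, HasDerivAt P (l * exp (-l * x) * dhat x) x := fun x => by
    rw [hP]; exact cP.integral_hasStrictDerivAt 0 x |>.hasDerivAt
  have A0 : A 0 = 0 := by simp [hA]
  have B0 : B 0 = 0 := by simp [hB]
  have P0 : P 0 = 0 := by simp [hP]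
  have kA : Continuous A := continuous_iff_continuousAt.2 fun x => (dA x).continuousAt
  have kB : Continuous B := continuous_iff_continuousAt.2 fun x => (dB x).continuousAt
  have kP : Continuous P := continuous_iff_continuousAt.2 fun x => (dP x).continuousAt
  have goal' : A c - B c ≤ P (9/32) := by
    have S0 : (0:ℝ) ≤ c^2 - c^4 := by nlinarith
    have tc : √(c^2-c^4) ≤ c := by
      apply Real.sqrt_le_iff.2 ⟨hc.le, by nlinarith [sq_nonneg (c^2)]⟩
    -- step 1
    have G1 : AntitoneOn (fun y => A y - B (√(y^2-y^4))
        - exp (-l * (y^2-y^4)) * (y - √(y^2-y^4)) - P (y^2-y^4)) (Set.Icc 0 c) := by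
      have hd : ∀ y ∈ Set.Ioo 0 c, ∃ d ≤ 0, HasDerivAt (fun y => A y - B (√(y^2-y^4))
        - exp (-l * (y^2-y^4)) * (y - √(y^2-y^4)) - P (y^2-y^4)) d y := by
        intro y hy
        have y0 : 0 < y := hy.1
        have yc : y < c := hy.2
        have y2 : y^2 ≤ 9/32 := by nlinarith
        have hp : 0 < y^2 - y^4 := by nlinarith [mul_pos y0 y0]
        have dh : HasDerivAt (fun y : ℝ => y^2-y^4) (2*y - 4*y^3) y := by
          refine ((hasDerivAt_pow 2 y).sub (hasDerivAt_pow 4 y)).congr_deriv ?_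
          norm_num
        have dt := dh.sqrt hp.ne'
        have dE := (dh.const_mul (-l)).exp
        have dBt := (dB (√(y^2-y^4))).comp y dt
        have dPh := (dP (y^2-y^4)).comp y dh
        have tot := (((dA y).sub dBt).sub (dE.mul ((hasDerivAt_id y).sub dt))).sub dPh
        rw [Real.sq_sqrt hp.le] at tot
        refine ⟨_, ?_, tot⟩
        have r := rise c y hc hc2 y0.le yc.le
        have q : 0 ≤ l * exp (-l * (y^2-y^4)) * (2*y-4*y^3) := by
          have : 0 ≤ 2*y-4*y^3 := by nlinarith
          positivity
        have := mul_nonneg q (sub_nonneg.2 r)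
        simp only [id, Pi.sub_apply]
        linarith
      apply antitoneOn_of_deriv_nonpos (convex_Icc 0 c)
      · apply Continuous.continuousOn; fun_prop
      · intro y hy
        rw [interior_Icc] at hy
        obtain ⟨d, _, h⟩ := hd y hy
        exact h.differentiableAt.differentiableWithinAt
      · intro y hy
        rw [interior_Icc] at hy
        obtain ⟨d, h0, h⟩ := hd y hy
        rw [h.deriv]; exact h0
    have G2 : MonotoneOn (fun x => B x + exp (-l * x^2) * (c - x) + P (x^2)) (Set.Icc (√(c^2-c^4)) c) := by
      have hd : ∀ x ∈ Set.Ioo (√(c^2-c^4)) c, ∃ d, 0 ≤ d ∧ HasDerivAt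
          (fun x => B x + exp (-l * x^2) * (c - x) + P (x^2)) d x := by
        intro x hx
        have x0 : 0 ≤ x := (Real.sqrt_nonneg _).trans hx.1.le
        have xc : x < c := hx.2
        have x2 : c^2-c^4 ≤ x^2 := by
          rw [← Real.sq_sqrt S0]; gcongr; exact hx.1.le
        have c4 : c^4 = 81/1024 := by
          rw [show c^4 = (c^2)^2 by ring, hc2]; norm_num
        have dh : HasDerivAt (fun y : ℝ => y^2) (2*x) x := by
          simpa using hasDerivAt_pow 2 x
        have dE := (dh.const_mul (-l)).exp
        have dPh := (dP (x^2)).comp x dh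
        have tot := ((dB x).add (dE.mul ((hasDerivAt_id x).const_sub c))).add dPh
        refine ⟨_, ?_, tot⟩
        have r := fall c c x hc hc2 x0 (by rw [hc2, c4] at x2; linarith) (by nlinarith) le_rfl
        have q : 0 ≤ l * exp (-l * x^2) * (2*x) := by positivity
        have := mul_nonneg q (sub_nonneg.2 r)
        simp only [id, Pi.sub_apply]
        linarith
      apply monotoneOn_of_deriv_nonneg (convex_Icc _ c)
      · apply Continuous.continuousOn; fun_prop
      · intro y hy
        rw [interior_Icc] at hy
        obtain ⟨d, _, h⟩ := hd y hy
        exact h.differentiableAt.differentiableWithinAt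
      · intro y hy
        rw [interior_Icc] at hy
        obtain ⟨d, h0, h⟩ := hd y hy
        rw [h.deriv]; exact h0
    have g1 := G1 (Set.left_mem_Icc.2 hc.le) (Set.right_mem_Icc.2 hc.le) hc.le
    have g2 := G2 (Set.left_mem_Icc.2 tc) (Set.right_mem_Icc.2 tc) tc
    simp only [Real.sq_sqrt S0] at g2
    norm_num [A0, B0, P0] at g1
    rw [hc2] at g2
    rw [hc2] at g1
    norm_num at g1 g2 ⊢
    linarith
  simpa only [hA, hB, hP] using goal'

theorem stmt15 (u v : ℝ) (hu : 0 < u) (hv : 0 < v) :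
    ∫ x in (0 : ℝ)..(3 / (4 * Real.sqrt 2) * Real.sqrt (u / v)),
        Real.exp (-u * x ^ 2) * (Real.exp (v * x ^ 4) - 1)
      < (1 / (3 * Real.sqrt 3)) * Real.sqrt v / u ^ ((3 : ℝ) / 2) := by
  obtain ⟨c, hcd⟩ : ∃ c, c = 3 / (4 * √2) := ⟨_, rfl⟩
  obtain ⟨r, hr⟩ : ∃ r, r = √(u / v) := ⟨_, rfl⟩
  have hc : 0 < c := by rw [hcd]; positivity
  have hc2 : c^2 = 9/32 := by
    rw [hcd, div_pow, mul_pow, Real.sq_sqrt (by norm_num)]; norm_num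
  have r0 : 0 < r := by rw [hr]; positivity
  have r2 : r^2 = u / v := by rw [hr, Real.sq_sqrt (by positivity)]
  rw [← hcd, ← hr]
  obtain ⟨l, hl⟩ : ∃ l, l = u^2 / v := ⟨_, rfl⟩
  have l0 : 0 < l := by rw [hl]; positivity
  have e1 : ∫ x in (0 : ℝ)..(c * r), exp (-u * x ^ 2) * (exp (v * x ^ 4) - 1)
      = r * ((∫ y in (0:ℝ)..c, exp (-l * (y^2-y^4))) - ∫ y in (0:ℝ)..c, exp (-l * y^2)) := by
    have h := intervalIntegral.mul_integral_comp_mul_right (a := 0) (b := c)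
      (f := fun x => exp (-u * x ^ 2) * (exp (v * x ^ 4) - 1)) r
    rw [zero_mul] at h
    rw [← h, ← intervalIntegral.integral_sub (Continuous.intervalIntegrable (by fun_prop) _ _)
      (Continuous.intervalIntegrable (by fun_prop) _ _)]
    congr 1
    apply intervalIntegral.integral_congr
    intro y _
    simp only
    have a1 : -u * (y * r)^2 = -l * y^2 := by
      rw [mul_pow, r2, hl]; field_simp
    have a2 : v * (y * r)^4 = l * y^4 := by
      rw [show v * (y*r)^4 = v * y^4 * (r^2)^2 by ring, r2, hl]; field_simp
    rw [a1, a2, mul_sub, ← exp_add, mul_one]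
    congr 2
    ring
  have e2 : √v / u ^ ((3:ℝ)/2) = r / l := by
    rw [show (3:ℝ)/2 = 1 + 1/2 by norm_num, rpow_add hu, rpow_one, ← sqrt_eq_rpow, hr, hl,
      sqrt_div hu.le]
    have su := Real.sqrt_pos.2 hu
    have sv := Real.sqrt_pos.2 hv
    have su2 := Real.sq_sqrt hu.le
    have sv2 := Real.sq_sqrt hv.le
    rw [div_div_eq_mul_div, div_eq_div_iff (by positivity) (by positivity)]
    field_simp
    rw [su2, sv2]
    try ring
  have h3 : 1924/10000 < 1 / (3 * √3) := by
    rw [lt_div_iff₀ (by positivity)]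
    have : √3 < 1.7321 := by
      rw [Real.sqrt_lt' (by norm_num)]; norm_num
    linarith
  rw [e1, mul_div_assoc, e2]
  have k1 := core c l hc hc2 l0
  have k2 := int_dhat l l0
  have k3 : l * ((∫ y in (0:ℝ)..c, exp (-l * (y^2-y^4))) - ∫ y in (0:ℝ)..c, exp (-l * y^2))
      < 1 / (3 * √3) := lt_of_le_of_lt (mul_le_mul_of_nonneg_left k1 l0.le) (lt_of_le_of_lt k2 h3)
  generalize ((∫ y in (0:ℝ)..c, exp (-l * (y^2-y^4))) - ∫ y in (0:ℝ)..c, exp (-l * y^2)) = T at *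
  have : 1 / (3 * √3) * (r / l) - r * T = (r / l) * (1 / (3 * √3) - l * T) := by
    field_simp
  have := mul_pos (div_pos r0 l0) (sub_pos.2 k3)
  linarith
end

section
/- Suppose x₀ > 0, g > 0, and f ∈ C⁴([-x₀, x₀]; ℝ) is an even function with f(0) = 0, f'(0) = 0, f''(0) = -g. Let h = sup_{|x| ≤ x₀} |f⁽⁴⁾(x)| and suppose x₀² < 27g/(8h). Then √(g/(2π)) ∫_{-x₀}^{x₀} e^{f(x)} dx ≤ 1 + (√2/(9√π)) · h^{1/2}/g. -/
open Real MeasureTheory intervalIntegral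

/-- alternating Taylor bounds for exp(-s) -/
theorem aux_taylor (n : ℕ) : ∀ s : ℝ, 0 ≤ s →
    0 ≤ (-1 : ℝ) ^ n * (Real.exp (-s) - ∑ k ∈ Finset.range n, (-s) ^ k / (k.factorial : ℝ)) := by
  induction n with
  | zero => intro s _; simp; positivity
  | succ n ih =>
    have hd : ∀ s : ℝ, HasDerivAt (fun s : ℝ => (-1 : ℝ) ^ (n + 1) * (Real.exp (-s)
        - ∑ k ∈ Finset.range (n + 1), (-s) ^ k / (k.factorial : ℝ)))
        ((-1 : ℝ) ^ n * (Real.exp (-s) - ∑ k ∈ Finset.range n, (-s) ^ k / (k.factorial : ℝ))) s := by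
      intro s
      have h1 : HasDerivAt (fun s : ℝ => Real.exp (-s)) (-Real.exp (-s)) s := by
        simpa using (hasDerivAt_neg s).exp
      have h2 : HasDerivAt (fun s : ℝ => ∑ k ∈ Finset.range (n + 1), (-s) ^ k / (k.factorial : ℝ))
          (∑ k ∈ Finset.range (n + 1), ((k : ℝ) * (-s) ^ (k - 1) * (-1)) / (k.factorial : ℝ)) s := by
        apply HasDerivAt.fun_sum
        intro k _
        exact ((hasDerivAt_neg s).pow k).div_const _
      have h3 := (h1.sub h2).const_mul ((-1 : ℝ) ^ (n + 1))
      refine h3.congr_deriv ?_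
      rw [Finset.sum_range_succ']
      have : ∀ k ∈ Finset.range n, (((k + 1 : ℕ) : ℝ) * (-s) ^ (k + 1 - 1) * (-1)) / ((k + 1).factorial : ℝ)
          = - ((-s) ^ k / (k.factorial : ℝ)) := by
        intro k _
        rw [Nat.factorial_succ]
        have : (k.factorial : ℝ) ≠ 0 := by positivity
        have : ((k : ℝ) + 1) ≠ 0 := by positivity
        push_cast
        simp
        field_simp
      rw [Finset.sum_congr rfl this, Finset.sum_neg_distrib]
      simp
      ring
    have hmono : MonotoneOn (fun s : ℝ => (-1 : ℝ) ^ (n + 1) * (Real.exp (-s)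
        - ∑ k ∈ Finset.range (n + 1), (-s) ^ k / (k.factorial : ℝ))) (Set.Ici 0) := by
      apply monotoneOn_of_deriv_nonneg (convex_Ici 0)
      · exact fun s _ => (hd s).continuousAt.continuousWithinAt
      · exact fun s _ => (hd s).differentiableAt.differentiableWithinAt
      · intro s hs
        rw [(hd s).deriv]
        rw [interior_Ici] at hs
        exact ih s (le_of_lt hs)
    intro s hs
    have h := hmono (Set.mem_Ici.2 le_rfl) (Set.mem_Ici.2 hs) hs
    simpa [Finset.sum_range_succ'] using h

noncomputable def auxL (m : ℝ) : ℝ := ∫ z in (0:ℝ)..1, Real.exp (-(m * (z ^ 2 / 2 - 9 * z ^ 4 / 64)))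

theorem auxL_int (m : ℝ) : IntervalIntegrable
    (fun z : ℝ => Real.exp (-(m * (z ^ 2 / 2 - 9 * z ^ 4 / 64)))) volume 0 1 := by
  apply Continuous.intervalIntegrable
  fun_prop

theorem aux_moment (k : ℕ) : ∫ z in (0:ℝ)..1, (z ^ 2 / 2 - 9 * z ^ 4 / 64) ^ k =
    ∑ j ∈ Finset.range (k + 1), (1 / 2 : ℝ) ^ j * (-9 / 64) ^ (k - j) * (k.choose j : ℝ)
      / (2 * j + 4 * (k - j : ℕ) + 1) := by
  have h : ∀ z : ℝ, (z ^ 2 / 2 - 9 * z ^ 4 / 64) ^ k = ∑ j ∈ Finset.range (k + 1),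
      ((1 / 2 : ℝ) ^ j * (-9 / 64) ^ (k - j) * (k.choose j : ℝ)) * z ^ (2 * j + 4 * (k - j)) := by
    intro z
    rw [show z ^ 2 / 2 - 9 * z ^ 4 / 64 = (1 / 2) * z ^ 2 + (-9 / 64) * z ^ 4 by ring, add_pow]
    refine Finset.sum_congr rfl fun j _ => ?_
    rw [mul_pow, mul_pow, pow_add, pow_mul, pow_mul]
    ring
  simp_rw [h]
  rw [intervalIntegral.integral_finsetSum]
  · refine Finset.sum_congr rfl fun j _ => ?_
    rw [intervalIntegral.integral_const_mul, integral_pow]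
    simp
    ring
  · intro j _
    apply Continuous.intervalIntegrable
    fun_prop

theorem auxL_le (m : ℝ) (hm : 0 ≤ m) : auxL m ≤ ∑ k ∈ Finset.range 17,
    (-m) ^ k / (k.factorial : ℝ) * ∑ j ∈ Finset.range (k + 1),
      (1 / 2 : ℝ) ^ j * (-9 / 64) ^ (k - j) * (k.choose j : ℝ) / (2 * j + 4 * (k - j : ℕ) + 1) := by
  have h1 : auxL m ≤ ∫ z in (0:ℝ)..1, ∑ k ∈ Finset.range 17,
      (-m) ^ k / (k.factorial : ℝ) * (z ^ 2 / 2 - 9 * z ^ 4 / 64) ^ k := by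
    apply intervalIntegral.integral_mono_on (by norm_num) (auxL_int m)
    · apply Continuous.intervalIntegrable
      fun_prop
    · intro z hz
      have hz1 : z ^ 2 ≤ 1 := by nlinarith [hz.1, hz.2]
      have hp : 0 ≤ z ^ 2 / 2 - 9 * z ^ 4 / 64 := by nlinarith [sq_nonneg z]
      have h := aux_taylor 17 _ (mul_nonneg hm hp)
      have e : ∑ k ∈ Finset.range 17, (-(m * (z ^ 2 / 2 - 9 * z ^ 4 / 64))) ^ k / (k.factorial : ℝ)
        = ∑ k ∈ Finset.range 17,
          (-m) ^ k / (k.factorial : ℝ) * (z ^ 2 / 2 - 9 * z ^ 4 / 64) ^ k := by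
        refine Finset.sum_congr rfl fun k _ => ?_
        rw [← neg_mul, mul_pow]; ring
      rw [e] at h
      have : (-1 : ℝ) ^ 17 = -1 := by norm_num
      rw [this] at h
      linarith
  refine h1.trans (le_of_eq ?_)
  rw [intervalIntegral.integral_finsetSum]
  · refine Finset.sum_congr rfl fun k _ => ?_
    rw [intervalIntegral.integral_const_mul, aux_moment]
  · intro j _
    apply Continuous.intervalIntegrable
    fun_prop

noncomputable def auxM (k : ℕ) : ℝ := ∑ j ∈ Finset.range (k + 1), (1 / 2 : ℝ) ^ j * (-9 / 64) ^ (k - j) * (k.choose j : ℝ)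
      / (2 * j + 4 * (k - j : ℕ) + 1)

theorem auxM_0 : auxM 0 = (1 / 1) := by
  norm_num [auxM, Finset.sum_range_succ, Nat.choose]

theorem auxM_1 : auxM 1 = (133 / 960) := by
  norm_num [auxM, Finset.sum_range_succ, Nat.choose]

theorem auxM_2 : auxM 2 = (4603 / 143360) := by
  norm_num [auxM, Finset.sum_range_succ, Nat.choose]

theorem auxM_3 : auxM 3 = (2262235 / 262406144) := by
  norm_num [auxM, Finset.sum_range_succ, Nat.choose]

theorem auxM_4 : auxM 4 = (4563380099 / 1835343544320) := by
  norm_num [auxM, Finset.sum_range_succ, Nat.choose]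

theorem auxM_5 : auxM 5 = (259793952505 / 347165427761152) := by
  norm_num [auxM, Finset.sum_range_succ, Nat.choose]

theorem auxM_6 : auxM 6 = (269131371741079 / 1161426158328217600) := by
  norm_num [auxM, Finset.sum_range_succ, Nat.choose]

theorem auxM_7 : auxM 7 = (5204283976125857 / 71063965379906764800) := by
  norm_num [auxM, Finset.sum_range_succ, Nat.choose]

theorem auxM_8 : auxM 8 = (2430067080860543449 / 103393332030072348999680) := by
  norm_num [auxM, Finset.sum_range_succ, Nat.choose]

theorem auxM_9 : auxM 9 = (549735061704007566571 / 72010414778591565420953600) := by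
  norm_num [auxM, Finset.sum_range_succ, Nat.choose]

theorem auxM_10 : auxM 10 = (194216626083599586889769 / 77571134808231015146512711680) := by
  norm_num [auxM, Finset.sum_range_succ, Nat.choose]

theorem auxM_11 : auxM 11 = (26771261693662728857494949 / 32344812574583599042909542809600) := by
  norm_num [auxM, Finset.sum_range_succ, Nat.choose]

theorem auxM_12 : auxM 12 = (57092788265617611391143376111 / 207276809347522862179674927556198400) := by
  norm_num [auxM, Finset.sum_range_succ, Nat.choose]

theorem auxM_13 : auxM 13 = (91535114520984837537486463543015 / 992969440688677153131313617262205730816) := by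
  norm_num [auxM, Finset.sum_range_succ, Nat.choose]

theorem auxM_14 : auxM 14 = (10893229586145333609453887608716853 / 351374583033114962970488120224848250142720) := by
  norm_num [auxM, Finset.sum_range_succ, Nat.choose]

theorem auxM_15 : auxM 15 = (5844180906292951779331998753249985241 / 558167006603555642143243804552487217550852096) := by
  norm_num [auxM, Finset.sum_range_succ, Nat.choose]

theorem auxM_16 : auxM 16 = (1116587258683250392960243184683984166957 / 314590127076687876758927604940034085969306058752) := by
  norm_num [auxM, Finset.sum_range_succ, Nat.choose]

theorem auxL_poly (m : ℝ) (hm : 0 ≤ m) : auxL m ≤ (1 / 1) * m ^ 0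
    + (-133 / 960) * m ^ 1
    + (4603 / 286720) * m ^ 2
    + (-2262235 / 1574436864) * m ^ 3
    + (4563380099 / 44048245063680) * m ^ 4
    + (-51958790501 / 8331970266267648) * m ^ 5
    + (269131371741079 / 836226833996316672000) * m ^ 6
    + (-743469139446551 / 51166055073532870656000) * m ^ 7
    + (2430067080860543449 / 4168819147452517111667097600) * m ^ 8
    + (-549735061704007566571 / 26131139314855307259955642368000) * m ^ 9
    + (194216626083599586889769 / 281490133992108707763665328144384000) * m ^ 10
    + (-26771261693662728857494949 / 1291101414577138606276011638422241280000) * m ^ 11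
    + (57092788265617611391143376111 / 99285923320358407020643777779303123517440000) * m ^ 12
    + (-18307022904196967507497292708603 / 1236648272186551791406695005202998827934086594560) * m ^ 13
    + (10893229586145333609453887608716853 / 30632235719939475484918430351102430226752485720064000) * m ^ 14
    + (-5844180906292951779331998753249985241 / 729900687598756450892500507588089245038889022498275328000) * m ^ 15
    + (1116587258683250392960243184683984166957 / 6582103129664760108383880706363404020293919484433479499776000) * m ^ 16 := by
  refine (auxL_le m hm).trans (le_of_eq ?_)
  change ∑ k ∈ Finset.range 17, (-m) ^ k / (k.factorial : ℝ) * auxM k = _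
  simp only [Finset.sum_range_succ, Finset.sum_range_zero, auxM_0, auxM_1, auxM_2, auxM_3, auxM_4, auxM_5, auxM_6, auxM_7, auxM_8, auxM_9, auxM_10, auxM_11, auxM_12, auxM_13, auxM_14, auxM_15, auxM_16, Nat.factorial]
  push_cast
  ring

theorem auxL_chord (a b m A B : ℝ) (hab : a < b) (ham : a ≤ m) (hmb : m ≤ b)
    (hA : auxL a ≤ A) (hB : auxL b ≤ B) :
    (b - a) * auxL m ≤ (b - m) * A + (m - a) * B := by
  have h1 : auxL m ≤ (b - m) / (b - a) * auxL a + (m - a) / (b - a) * auxL b := by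
    unfold auxL
    rw [← intervalIntegral.integral_const_mul, ← intervalIntegral.integral_const_mul,
      ← intervalIntegral.integral_add ((auxL_int a).const_mul _) ((auxL_int b).const_mul _)]
    apply intervalIntegral.integral_mono_on (by norm_num) (auxL_int m)
      (((auxL_int a).const_mul _).add ((auxL_int b).const_mul _))
    intro z _
    have hne : b - a ≠ 0 := by linarith
    have h := convexOn_exp.2 (Set.mem_univ (-(a * (z ^ 2 / 2 - 9 * z ^ 4 / 64))))
      (Set.mem_univ (-(b * (z ^ 2 / 2 - 9 * z ^ 4 / 64))))
      (div_nonneg (by linarith : 0 ≤ b - m) (by linarith : 0 ≤ b - a))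
      (div_nonneg (by linarith : 0 ≤ m - a) (by linarith : 0 ≤ b - a))
      (by field_simp; ring)
    simp only [smul_eq_mul] at h
    have e0 : (b - m) / (b - a) * (-(a * (z ^ 2 / 2 - 9 * z ^ 4 / 64)))
        + (m - a) / (b - a) * (-(b * (z ^ 2 / 2 - 9 * z ^ 4 / 64)))
        = -(m * (z ^ 2 / 2 - 9 * z ^ 4 / 64)) := by
      field_simp
      ring
    rw [e0] at h
    exact h
  have h2 : (b - a) * auxL m ≤ (b - a) * ((b - m) / (b - a) * auxL a + (m - a) / (b - a) * auxL b) :=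
    mul_le_mul_of_nonneg_left h1 (by linarith)
  have hne : b - a ≠ 0 := by linarith
  have e : (b - a) * ((b - m) / (b - a) * auxL a + (m - a) / (b - a) * auxL b)
      = (b - m) * auxL a + (m - a) * auxL b := by field_simp
  rw [e] at h2
  have := mul_le_mul_of_nonneg_left hA (by linarith : 0 ≤ b - m)
  have := mul_le_mul_of_nonneg_left hB (by linarith : 0 ≤ m - a)
  linarith

noncomputable def auxT (c m : ℝ) : ℝ :=
  1.2533 * (3 / (2 * c) - m / (2 * c ^ 3)) + 0.2041 * (2 / c ^ 2 - m / c ^ 4)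

theorem aux_piece (a b c w : ℝ) (hab : a < b) (hc : 0 < c) (hw : 0 < w) (ham : a ≤ w ^ 2)
    (hmb : w ^ 2 ≤ b) (hA : auxL a ≤ auxT c a) (hB : auxL b ≤ auxT c b) :
    w ^ 2 * auxL (w ^ 2) ≤ 1.2533 * w + 0.2041 := by
  have h := auxL_chord a b (w ^ 2) _ _ hab ham hmb hA hB
  have e : (b - w ^ 2) * auxT c a + (w ^ 2 - a) * auxT c b = (b - a) * auxT c (w ^ 2) := by
    unfold auxT; ring
  rw [e] at h
  have h1 : auxL (w ^ 2) ≤ auxT c (w ^ 2) := le_of_mul_le_mul_left h (by linarith)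
  have h2 : w ^ 2 * (3 / (2 * c) - w ^ 2 / (2 * c ^ 3)) ≤ w := by
    have : w - w ^ 2 * (3 / (2 * c) - w ^ 2 / (2 * c ^ 3)) = w * ((w - c) ^ 2 * (w + 2 * c)) / (2 * c ^ 3) := by
      field_simp; ring
    have : 0 ≤ w * ((w - c) ^ 2 * (w + 2 * c)) / (2 * c ^ 3) := by positivity
    linarith
  have h3 : w ^ 2 * (2 / c ^ 2 - w ^ 2 / c ^ 4) ≤ 1 := by
    have : 1 - w ^ 2 * (2 / c ^ 2 - w ^ 2 / c ^ 4) = (w ^ 2 / c ^ 2 - 1) ^ 2 := by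
      field_simp; ring
    have := sq_nonneg (w ^ 2 / c ^ 2 - 1)
    linarith
  have h4 := mul_le_mul_of_nonneg_left h1 (sq_nonneg w)
  unfold auxT at h4
  linarith

theorem aux_mid (w : ℝ) (hw : 0 < w) (h1 : 1.9 ≤ w ^ 2) (h2 : w ^ 2 ≤ 16) :
    w ^ 2 * auxL (w ^ 2) ≤ 1.2533 * w + 0.2041 := by
  rcases le_total (w ^ 2) 6 with h | h
  · apply aux_piece 1.9 6 (9/4) w <;> first | assumption | norm_num1 | skip
    all_goals
      refine (auxL_poly _ (by norm_num)).trans ?_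
      unfold auxT
      norm_num1
  rcases le_total (w ^ 2) 8.4 with h' | h'
  · apply aux_piece 6 8.4 (11/4) w <;> first | assumption | norm_num1 | skip
    all_goals
      refine (auxL_poly _ (by norm_num)).trans ?_
      unfold auxT
      norm_num1
  rcases le_total (w ^ 2) 10.6 with h3 | h3
  · apply aux_piece 8.4 10.6 (31/10) w <;> first | assumption | norm_num1 | skip
    all_goals
      refine (auxL_poly _ (by norm_num)).trans ?_
      unfold auxT
      norm_num1
  rcases le_total (w ^ 2) 13.2 with h4 | h4
  · apply aux_piece 10.6 13.2 (69/20) w <;> first | assumption | norm_num1 | skip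
    all_goals
      refine (auxL_poly _ (by norm_num)).trans ?_
      unfold auxT
      norm_num1
  · apply aux_piece 13.2 16 (77/20) w <;> first | assumption | norm_num1 | skip
    all_goals
      refine (auxL_poly _ (by norm_num)).trans ?_
      unfold auxT
      norm_num1

theorem aux_small (w : ℝ) (hw : 0 < w) (h1 : w ^ 2 ≤ 1.9) :
    w ^ 2 * auxL (w ^ 2) ≤ 1.2533 * w + 0.2041 := by
  have h : auxL (w ^ 2) ≤ 1 := by
    have := auxL_int (w ^ 2)
    have h2 : auxL (w ^ 2) ≤ ∫ z in (0:ℝ)..1, (1:ℝ) := by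
      apply intervalIntegral.integral_mono_on (by norm_num) this (by simp)
      intro z hz
      have hz1 : z ^ 2 ≤ 1 := by nlinarith [hz.1, hz.2]
      have hp : 0 ≤ z ^ 2 / 2 - 9 * z ^ 4 / 64 := by nlinarith [sq_nonneg z]
      rw [Real.exp_le_one_iff]
      have := mul_nonneg (sq_nonneg w) hp
      linarith
    simpa using h2
  have h3 := mul_le_mul_of_nonneg_left h (sq_nonneg w)
  have h4 : w ≤ 1.3785 := by
    by_contra hcon
    push Not at hcon
    nlinarith
  nlinarith

theorem aux_gauss2 (b : ℝ) (hb : 0 < b) :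
    ∫ x in Set.Ioi (0:ℝ), x ^ 2 * Real.exp (-b * x ^ 2) = √(π / b) / (4 * b) := by
  have h := integral_rpow_mul_exp_neg_mul_rpow (p := 2) (q := 2) (b := b) (by norm_num) (by norm_num) hb
  simp only [Real.rpow_two] at h
  rw [h]
  have hG : Real.Gamma ((2 + 1) / 2) = √π / 2 := by
    rw [show ((2:ℝ) + 1) / 2 = 1 / 2 + 1 by norm_num, Real.Gamma_add_one (by norm_num),
      Real.Gamma_one_half_eq]
    ring
  rw [hG, show (-(2 + 1) / 2 : ℝ) = -(1 + 1 / 2) by norm_num, Real.rpow_neg hb.le,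
    Real.rpow_add hb, Real.rpow_one, ← Real.sqrt_eq_rpow, Real.sqrt_div pi_pos.le]
  have : √b ≠ 0 := by positivity
  field_simp
  norm_num

theorem aux_int2 (b : ℝ) (hb : 0 < b) :
    IntegrableOn (fun x : ℝ => x ^ 2 * Real.exp (-b * x ^ 2)) (Set.Ioi (0:ℝ)) := by
  have := (integrable_rpow_mul_exp_neg_mul_sq hb (s := 2) (by norm_num)).integrableOn (s := Set.Ioi (0:ℝ))
  simpa using this

theorem aux_large (w : ℝ) (hw : 4 ≤ w) :
    w ^ 2 * auxL (w ^ 2) ≤ √(π / 2) * w + 0.2041 := by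
  have hw0 : 0 < w := by linarith
  have hb1 : 0 < w ^ 2 / 2 := by positivity
  have hb2 : 0 < 23 / 64 * w ^ 2 := by positivity
  have i1 := (integrable_exp_neg_mul_sq hb1).integrableOn (s := Set.Ioi (0:ℝ))
  have i2 := aux_int2 _ hb1
  have i3 := aux_int2 _ hb2
  have hle : auxL (w ^ 2) ≤ ∫ z in Set.Ioi (0:ℝ), (Real.exp (-(w ^ 2 / 2) * z ^ 2)
      + (z ^ 2 * Real.exp (-(23 / 64 * w ^ 2) * z ^ 2) - z ^ 2 * Real.exp (-(w ^ 2 / 2) * z ^ 2))) := by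
    have iall : IntegrableOn (fun z : ℝ => Real.exp (-(w ^ 2 / 2) * z ^ 2)
      + (z ^ 2 * Real.exp (-(23 / 64 * w ^ 2) * z ^ 2) - z ^ 2 * Real.exp (-(w ^ 2 / 2) * z ^ 2)))
      (Set.Ioi (0:ℝ)) := i1.add (i3.sub i2)
    have h1 : auxL (w ^ 2) ≤ ∫ z in Set.Ioc (0:ℝ) 1, (Real.exp (-(w ^ 2 / 2) * z ^ 2)
      + (z ^ 2 * Real.exp (-(23 / 64 * w ^ 2) * z ^ 2) - z ^ 2 * Real.exp (-(w ^ 2 / 2) * z ^ 2))) := by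
      unfold auxL
      rw [intervalIntegral.integral_of_le (by norm_num)]
      apply setIntegral_mono_on (auxL_int (w ^ 2)).1
        (iall.mono_set Set.Ioc_subset_Ioi_self) measurableSet_Ioc
      intro z hz
      have hz1 : z ^ 2 ≤ 1 := by nlinarith [hz.1, hz.2]
      have h := convexOn_exp.2 (Set.mem_univ (-(w ^ 2 / 2) * z ^ 2))
        (Set.mem_univ (-(23 / 64 * w ^ 2) * z ^ 2)) (by linarith : 0 ≤ 1 - z ^ 2) (sq_nonneg z)
        (by ring)
      simp only [smul_eq_mul] at h
      rw [show (1 - z ^ 2) * (-(w ^ 2 / 2) * z ^ 2) + z ^ 2 * (-(23 / 64 * w ^ 2) * z ^ 2)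
        = -(w ^ 2 * (z ^ 2 / 2 - 9 * z ^ 4 / 64)) by ring] at h
      linarith
    refine h1.trans ?_
    apply setIntegral_mono_set iall
    · refine Filter.Eventually.of_forall fun z => ?_
      have : Real.exp (-(w ^ 2 / 2) * z ^ 2) ≤ Real.exp (-(23 / 64 * w ^ 2) * z ^ 2) := by
        apply Real.exp_le_exp.2
        nlinarith [mul_nonneg (sq_nonneg w) (sq_nonneg z)]
      have h3 := mul_le_mul_of_nonneg_left this (sq_nonneg z)
      have h4 := Real.exp_pos (-(w ^ 2 / 2) * z ^ 2)
      simp only [Pi.zero_apply, Pi.add_apply, Pi.sub_apply]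
      linarith
    · exact Set.Ioc_subset_Ioi_self.eventuallyLE
  have i32 : IntegrableOn (fun z : ℝ => z ^ 2 * Real.exp (-(23 / 64 * w ^ 2) * z ^ 2)
      - z ^ 2 * Real.exp (-(w ^ 2 / 2) * z ^ 2)) (Set.Ioi (0:ℝ)) := i3.sub i2
  rw [integral_add i1 i32, integral_sub i3 i2, integral_gaussian_Ioi, aux_gauss2 _ hb1,
    aux_gauss2 _ hb2] at hle
  have e1 : √(π / (w ^ 2 / 2)) = 2 * √(π / 2) / w := by
    rw [show π / (w ^ 2 / 2) = (2 / w) ^ 2 * (π / 2) by field_simp, Real.sqrt_mul (by positivity),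
      Real.sqrt_sq (by positivity)]
    ring
  have e2 : √(π / (23 / 64 * w ^ 2)) = √(64 * π / 23) / w := by
    rw [show π / (23 / 64 * w ^ 2) = (1 / w) ^ 2 * (64 * π / 23) by field_simp,
      Real.sqrt_mul (by positivity), Real.sqrt_sq (by positivity)]
    ring
  rw [e1, e2] at hle
  have n1 : 1.2533 ≤ √(π / 2) := by
    apply Real.le_sqrt_of_sq_le
    have := Real.pi_gt_d6
    norm_num at *; linarith
  have n2 : √(64 * π / 23) ≤ 2.96 := by
    apply Real.sqrt_le_iff.2
    have := Real.pi_lt_d6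
    constructor
    · norm_num
    · norm_num at *; linarith
  have h5 := mul_le_mul_of_nonneg_left hle (sq_nonneg w)
  have e3 : w ^ 2 * (2 * √(π / 2) / w / 2 + (√(64 * π / 23) / w / (4 * (23 / 64 * w ^ 2))
      - 2 * √(π / 2) / w / (4 * (w ^ 2 / 2)))) = √(π / 2) * w
      + (√(64 * π / 23) * (16 / 23) - √(π / 2)) / w := by
    field_simp
    ring
  rw [e3] at h5
  have h6 : (√(64 * π / 23) * (16 / 23) - √(π / 2)) / w ≤ 0.2041 := by
    rw [div_le_iff₀ hw0]
    norm_num at *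
    linarith
  linarith

theorem aux_core (w : ℝ) (hw : 0 < w) :
    w ^ 2 * auxL (w ^ 2) ≤ √(π / 2) * w + 0.2041 := by
  have n1 : 1.2533 ≤ √(π / 2) := by
    apply Real.le_sqrt_of_sq_le
    have := Real.pi_gt_d6
    norm_num at *; linarith
  have n2 := mul_le_mul_of_nonneg_right n1 hw.le
  rcases le_total (w ^ 2) 1.9 with h | h
  · linarith [aux_small w hw h]
  rcases le_total w 4 with h' | h'
  · linarith [aux_mid w hw h (by nlinarith)]
  · exact aux_large w h'

theorem aux_fbound (x₀ g h : ℝ) (f : ℝ → ℝ) (hx₀ : 0 < x₀)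
    (hf : ContDiffOn ℝ 4 f (Set.Icc (-x₀) x₀))
    (heven : ∀ x, f (-x) = f x)
    (hf0 : f 0 = 0) (hf1 : deriv f 0 = 0) (hf2 : iteratedDeriv 2 f 0 = -g)
    (hh : ∀ x ∈ Set.Icc (-x₀) x₀, |iteratedDeriv 4 f x| ≤ h) (x : ℝ) (hx : 0 < x) (hxx : x ≤ x₀) :
    f x ≤ -g * x ^ 2 / 2 + h * x ^ 4 / 24 := by
  have hat : ∀ y, -x₀ < y → y < x₀ → ContDiffAt ℝ 4 f y := fun y h1 h2 =>
    hf.contDiffAt (Icc_mem_nhds h1 h2)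
  have hsub : Set.uIcc 0 x ⊆ Set.Icc (-x₀) x₀ := by
    rw [Set.uIcc_of_le hx.le]
    exact Set.Icc_subset_Icc (by linarith) hxx
  have hud : UniqueDiffOn ℝ (Set.uIcc 0 x) := by
    rw [Set.uIcc_of_le hx.le]; exact uniqueDiffOn_Icc hx
  have hf' := hf.mono hsub
  obtain ⟨ξ, hξ, he⟩ := taylor_mean_remainder_lagrange (f := f) (x := x) (x₀ := 0) (n := 3) hx.ne
    (hf'.of_le (by norm_num))
    ((hf'.differentiableOn_iteratedDerivWithin (m := 3) (by norm_num) hud).mono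
      Set.uIoo_subset_uIcc_self)
  have hξ' := hξ
  rw [Set.uIoo_of_le hx.le] at hξ'
  have hk : ∀ k : ℕ, k ≤ 4 → iteratedDerivWithin k f (Set.uIcc 0 x) 0 = iteratedDeriv k f 0 := by
    intro k hk
    exact iteratedDerivWithin_eq_iteratedDeriv hud
      ((hat 0 (by linarith) hx₀).of_le (by exact_mod_cast hk)) Set.left_mem_uIcc
  have h4 : iteratedDerivWithin 4 f (Set.uIcc 0 x) ξ = iteratedDeriv 4 f ξ :=
    iteratedDerivWithin_eq_iteratedDeriv hud
      (hat ξ (by linarith [hξ'.1]) (by linarith [hξ'.2])) (Set.uIoo_subset_uIcc_self hξ)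
  have h3 : iteratedDeriv 3 f 0 = 0 := by
    have := iteratedDeriv_comp_neg 3 f 0
    simp only [heven, neg_zero, smul_eq_mul] at this
    norm_num at this
    linarith
  rw [taylor_within_apply] at he
  simp only [Finset.sum_range_succ, Finset.sum_range_zero] at he
  rw [hk 0 (by norm_num), hk 1 (by norm_num), hk 2 (by norm_num), hk 3 (by norm_num), h3, hf2,
    iteratedDeriv_one, hf1, iteratedDeriv_zero, hf0, h4] at he
  have hb := (abs_le.1 (hh ξ ⟨by linarith [hξ'.1], by linarith [hξ'.2]⟩)).2
  have := mul_le_mul_of_nonneg_right hb (by positivity : 0 ≤ x ^ 4 / 24)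
  norm_num [Nat.factorial] at he
  linarith

theorem stmt17 (x₀ g h : ℝ) (f : ℝ → ℝ)
    (hx₀ : 0 < x₀) (hg : 0 < g)
    (hf : ContDiffOn ℝ 4 f (Set.Icc (-x₀) x₀))
    (heven : ∀ x, f (-x) = f x)
    (hf0 : f 0 = 0) (hf1 : deriv f 0 = 0) (hf2 : iteratedDeriv 2 f 0 = -g)
    (hh : ∀ x ∈ Set.Icc (-x₀) x₀, |iteratedDeriv 4 f x| ≤ h)
    (hcut : x₀ ^ 2 < 27 * g / (8 * h)) :
    Real.sqrt (g / (2 * Real.pi)) * (∫ x in (-x₀)..x₀, Real.exp (f x))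
      ≤ 1 + (Real.sqrt 2 / (9 * Real.sqrt Real.pi)) * Real.sqrt h / g := by
  have hh0 : 0 < h := by
    have h0 : 0 ≤ h := (abs_nonneg _).trans (hh 0 ⟨by linarith, hx₀.le⟩)
    rcases h0.eq_or_lt with h0 | h0
    · rw [← h0] at hcut
      simp at hcut
      nlinarith
    · exact h0
  have hint : IntervalIntegrable (fun x => Real.exp (f x)) volume (-x₀) x₀ := by
    apply ContinuousOn.intervalIntegrable
    rw [Set.uIcc_of_le (by linarith)]
    exact hf.continuousOn.rexp
  have hc : Continuous fun x : ℝ => Real.exp (-g * x ^ 2 / 2 + h * x ^ 4 / 24) := by fun_prop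
  have hbound : ∀ x ∈ Set.Icc (-x₀) x₀, f x ≤ -g * x ^ 2 / 2 + h * x ^ 4 / 24 := by
    intro x hx
    rcases lt_trichotomy x 0 with h0 | h0 | h0
    · have := aux_fbound x₀ g h f hx₀ hf heven hf0 hf1 hf2 hh (-x) (by linarith) (by linarith [hx.1])
      rw [heven] at this
      convert this using 2 <;> ring
    · subst h0; simp [hf0]
    · exact aux_fbound x₀ g h f hx₀ hf heven hf0 hf1 hf2 hh x h0 hx.2
  -- the maximal cut-off
  set w : ℝ := √(27 / 8) * g / √h with hw
  have hw0 : 0 < w := by positivity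
  have hwsq : w ^ 2 = 27 * g ^ 2 / (8 * h) := by
    rw [hw, div_pow, mul_pow, Real.sq_sqrt (by norm_num), Real.sq_sqrt hh0.le]
    field_simp
  set x₁ : ℝ := w / √g with hx₁
  have hx₁0 : 0 < x₁ := by positivity
  have hx₁sq : x₁ ^ 2 = 27 * g / (8 * h) := by
    rw [hx₁, div_pow, hwsq, Real.sq_sqrt hg.le]
    field_simp
  have hlt : x₀ ≤ x₁ := by
    rw [← hx₁sq] at hcut
    exact (lt_of_pow_lt_pow_left₀ 2 hx₁0.le hcut).le
  have s1 : (∫ x in (-x₀)..x₀, Real.exp (f x))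
      ≤ ∫ x in (-x₀)..x₀, Real.exp (-g * x ^ 2 / 2 + h * x ^ 4 / 24) := by
    apply intervalIntegral.integral_mono_on (by linarith) hint (hc.intervalIntegrable _ _)
    intro x hx
    exact Real.exp_le_exp.2 (hbound x hx)
  have s2 : (∫ x in (-x₀)..x₀, Real.exp (-g * x ^ 2 / 2 + h * x ^ 4 / 24))
      ≤ ∫ x in (-x₁)..x₁, Real.exp (-g * x ^ 2 / 2 + h * x ^ 4 / 24) := by
    apply intervalIntegral.integral_mono_interval (by linarith) (by linarith) hlt
    · exact Filter.Eventually.of_forall fun x => (Real.exp_pos _).le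
    · exact hc.intervalIntegrable _ _
  have s3 : (∫ x in (-x₁)..x₁, Real.exp (-g * x ^ 2 / 2 + h * x ^ 4 / 24))
      = 2 * ∫ x in (0:ℝ)..x₁, Real.exp (-g * x ^ 2 / 2 + h * x ^ 4 / 24) := by
    rw [← intervalIntegral.integral_add_adjacent_intervals (b := 0) (hc.intervalIntegrable _ _)
      (hc.intervalIntegrable _ _)]
    have := intervalIntegral.integral_comp_neg (a := 0) (b := x₁)
      (fun x : ℝ => Real.exp (-g * x ^ 2 / 2 + h * x ^ 4 / 24))
    simp only [neg_zero] at this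
    rw [← this]
    have e : ∀ x : ℝ, Real.exp (-g * (-x) ^ 2 / 2 + h * (-x) ^ 4 / 24)
      = Real.exp (-g * x ^ 2 / 2 + h * x ^ 4 / 24) := by
      intro x; congr 1; ring
    simp_rw [e]
    ring
  have s4 : (∫ x in (0:ℝ)..x₁, Real.exp (-g * x ^ 2 / 2 + h * x ^ 4 / 24)) = x₁ * auxL (w ^ 2) := by
    have := intervalIntegral.mul_integral_comp_mul_left (a := 0) (b := 1) (c := x₁)
      (f := fun x : ℝ => Real.exp (-g * x ^ 2 / 2 + h * x ^ 4 / 24))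
    simp only [mul_zero, mul_one] at this
    rw [← this]
    unfold auxL
    congr 1
    apply intervalIntegral.integral_congr
    intro z _
    simp only
    congr 1
    rw [mul_pow, mul_pow, show x₁ ^ 4 = (x₁ ^ 2) ^ 2 by ring, hx₁sq, hwsq]
    field_simp
    ring
  have core := aux_core w hw0
  have hP : 0 < √(π / 2) := by positivity
  have e1 : √(g / (2 * π)) = √g / (2 * √(π / 2)) := by
    rw [show g / (2 * π) = g / (2 ^ 2 * (π / 2)) by field_simp, Real.sqrt_div hg.le,
      Real.sqrt_mul (by norm_num), Real.sqrt_sq (by norm_num)]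
  have e2 : √2 / (9 * √π) = 1 / (9 * √(π / 2)) := by
    rw [Real.sqrt_div pi_pos.le]
    have : √π ≠ 0 := by positivity
    field_simp
  have hI : (∫ x in (-x₀)..x₀, Real.exp (f x)) ≤ 2 * (x₁ * auxL (w ^ 2)) := by
    rw [← s4, ← s3]; exact s1.trans s2
  have h8 : √h / g = √(27 / 8) / w := by
    rw [hw]
    have : √h ≠ 0 := by positivity
    field_simp
  have h9 : (0.2041 : ℝ) ≤ √(27 / 8) / 9 := by
    have : (1.837 : ℝ) ≤ √(27 / 8) := by
      apply Real.le_sqrt_of_sq_le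
      norm_num
    norm_num at *
    linarith
  calc √(g / (2 * π)) * (∫ x in (-x₀)..x₀, Real.exp (f x))
      ≤ √(g / (2 * π)) * (2 * (x₁ * auxL (w ^ 2))) :=
        mul_le_mul_of_nonneg_left hI (Real.sqrt_nonneg _)
    _ = (w ^ 2 * auxL (w ^ 2)) / (√(π / 2) * w) := by
        rw [e1, hx₁]
        have : √g ≠ 0 := by positivity
        field_simp
    _ ≤ (√(π / 2) * w + √(27 / 8) / 9) / (√(π / 2) * w) := by
        apply div_le_div_of_nonneg_right _ (by positivity)
        linarith
    _ = 1 + (√2 / (9 * √π)) * √h / g := by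
        rw [mul_div_assoc, h8, e2]
        field_simp
end
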